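/- arXiv:2503.20657 — 4 statements merged into one kernel-verified Lean document; each statement's English description precedes it below -/
import Mathlib

section
/- Let m ≥ 2 be an integer and let d₁, …, d_m ∈ (0,1), with indices taken modulo m (so d_{m+1} := d₁). Then ∏_{j=1}^{m} (1 − d_j d_{j+1})/(1 − d_j²) ≥ 1, and equality holds if and only if d₁ = d₂ = ⋯ = d_m. -/
/-!
The pairwise inequality `(1 - a²) (1 - b²) ≤ (1 - a b)²`, with defect `(a - b)²`, is multiplied over
all pairs `(a, b) = (d i, d (σ i))` for a permutation `σ`. Each factor `1 - d i²` then occurs twice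
on the left, so the result is the square of the claimed inequality, and equality forces
`d (σ i) = d i` for every `i`, so that `d` is constant on the cycles of `σ`. The rotation
`j ↦ j + 1` of `Fin m` has a single cycle.
-/

open Equiv.Perm Finset

theorem prod_eq_prod_iff_of_pos_of_le {ι R : Type*} [CommMonoidWithZero R] [PartialOrder R]
    [ZeroLEOneClass R] [PosMulStrictMono R] [Nontrivial R] {s : Finset ι} {f g : ι → R}
    (hf : ∀ i ∈ s, 0 < f i) (hfg : ∀ i ∈ s, f i ≤ g i) :
    ∏ i ∈ s, f i = ∏ i ∈ s, g i ↔ ∀ i ∈ s, f i = g i := by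
  refine ⟨fun h ↦ ?_, prod_congr rfl⟩
  by_contra! ⟨i, hi, hne⟩
  exact (prod_lt_prod hf hfg ⟨i, hi, (hfg i hi).lt_of_ne hne⟩).ne h

theorem forall_apply_perm_eq_iff_forall_sameCycle {α β : Type*} {σ : Equiv.Perm α} {f : α → β} :
    (∀ i, f (σ i) = f i) ↔ ∀ i j, σ.SameCycle i j → f i = f j := by
  refine ⟨fun h i j ↦ ?_, fun h i ↦ h _ _ (sameCycle_apply_left.2 .rfl)⟩
  have invariant_zpow (k : ℤ) : f ((σ ^ k) i) = f i := by
    induction k with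
    | zero => rfl
    | succ n ih => rw [add_comm, zpow_one_add, mul_apply, h, ih]
    | pred n ih => rw [← h, ← mul_apply, ← zpow_one_add, add_sub_cancel, ih]
  rintro ⟨k, rfl⟩
  exact (invariant_zpow k).symm

theorem sameCycle_finRotate : ∀ {n : ℕ} (i j : Fin n), (finRotate n).SameCycle i j
  | 0, i, _ => i.elim0
  | 1, i, j => (Subsingleton.elim i j).sameCycle _
  | n + 2, i, j => by
    have moves (k : Fin (n + 2)) : finRotate (n + 2) k ≠ k := by
      rw [← mem_support, support_finRotate]
      exact mem_univ k
    exact isCycle_finRotate.sameCycle (moves i) (moves j)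

theorem one_sub_mul_sq_eq_add_sq {R : Type*} [CommRing R] (a b : R) :
    (1 - a * b) ^ 2 = (1 - a ^ 2) * (1 - b ^ 2) + (a - b) ^ 2 := by
  ring

section OrderedRing

variable {R : Type*} [CommRing R] [LinearOrder R] [IsStrictOrderedRing R]

theorem one_sub_sq_mul_one_sub_sq_le (a b : R) :
    (1 - a ^ 2) * (1 - b ^ 2) ≤ (1 - a * b) ^ 2 := by
  rw [one_sub_mul_sq_eq_add_sq]
  exact le_add_of_nonneg_right (sq_nonneg _)

theorem one_sub_sq_mul_one_sub_sq_eq_iff {a b : R} :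
    (1 - a ^ 2) * (1 - b ^ 2) = (1 - a * b) ^ 2 ↔ a = b := by
  rw [one_sub_mul_sq_eq_add_sq, left_eq_add, sq_eq_zero_iff, sub_eq_zero]

theorem one_sub_sq_nonneg {a : R} (ha : |a| ≤ 1) : 0 ≤ 1 - a ^ 2 :=
  sub_nonneg.2 ((sq_le_one_iff_abs_le_one a).2 ha)

theorem one_sub_sq_pos {a : R} (ha : |a| < 1) : 0 < 1 - a ^ 2 :=
  sub_pos.2 ((sq_lt_one_iff_abs_lt_one a).2 ha)

theorem one_sub_mul_nonneg {a b : R} (ha : |a| ≤ 1) (hb : |b| ≤ 1) : 0 ≤ 1 - a * b := by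
  have abs_mul_le_one : |a * b| ≤ 1 := by
    rw [abs_mul]
    exact mul_le_one₀ ha (abs_nonneg b) hb
  exact sub_nonneg.2 ((le_abs_self _).trans abs_mul_le_one)

section TwoFamilies

variable {ι : Type*} {s : Finset ι} {a b : ι → R}

theorem prod_one_sub_sq_mul_prod_one_sub_sq_le (ha : ∀ i ∈ s, |a i| ≤ 1)
    (hb : ∀ i ∈ s, |b i| ≤ 1) :
    (∏ i ∈ s, (1 - a i ^ 2)) * ∏ i ∈ s, (1 - b i ^ 2) ≤ (∏ i ∈ s, (1 - a i * b i)) ^ 2 := by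
  rw [← prod_mul_distrib, ← prod_pow]
  exact prod_le_prod
    (fun i hi ↦ mul_nonneg (one_sub_sq_nonneg (ha i hi)) (one_sub_sq_nonneg (hb i hi)))
    fun i _ ↦ one_sub_sq_mul_one_sub_sq_le (a i) (b i)

theorem prod_one_sub_sq_mul_prod_one_sub_sq_eq_iff (ha : ∀ i ∈ s, |a i| < 1)
    (hb : ∀ i ∈ s, |b i| < 1) :
    (∏ i ∈ s, (1 - a i ^ 2)) * ∏ i ∈ s, (1 - b i ^ 2) = (∏ i ∈ s, (1 - a i * b i)) ^ 2 ↔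
      ∀ i ∈ s, a i = b i := by
  rw [← prod_mul_distrib, ← prod_pow, prod_eq_prod_iff_of_pos_of_le
    (fun i hi ↦ mul_pos (one_sub_sq_pos (ha i hi)) (one_sub_sq_pos (hb i hi)))
    fun i _ ↦ one_sub_sq_mul_one_sub_sq_le (a i) (b i)]
  simp only [one_sub_sq_mul_one_sub_sq_eq_iff]

end TwoFamilies

variable {ι : Type*} [Fintype ι] (σ : Equiv.Perm ι) {d : ι → R}

theorem prod_one_sub_mul_perm_nonneg (hd : ∀ i, |d i| ≤ 1) : 0 ≤ ∏ i, (1 - d i * d (σ i)) :=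
  prod_nonneg fun i _ ↦ one_sub_mul_nonneg (hd i) (hd (σ i))

theorem prod_one_sub_sq_le_prod_one_sub_mul_perm (hd : ∀ i, |d i| ≤ 1) :
    ∏ i, (1 - d i ^ 2) ≤ ∏ i, (1 - d i * d (σ i)) := by
  refine le_of_sq_le_sq ?_ (prod_one_sub_mul_perm_nonneg σ hd)
  calc (∏ i, (1 - d i ^ 2)) ^ 2
      = (∏ i, (1 - d i ^ 2)) * ∏ i, (1 - d (σ i) ^ 2) := by
        rw [sq, Equiv.prod_comp σ fun i ↦ 1 - d i ^ 2]
    _ ≤ (∏ i, (1 - d i * d (σ i))) ^ 2 :=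
        prod_one_sub_sq_mul_prod_one_sub_sq_le (fun i _ ↦ hd i) fun i _ ↦ hd (σ i)

theorem prod_one_sub_mul_perm_eq_prod_one_sub_sq_iff (hd : ∀ i, |d i| < 1) :
    ∏ i, (1 - d i * d (σ i)) = ∏ i, (1 - d i ^ 2) ↔ ∀ i, d (σ i) = d i := by
  have num_nonneg := prod_one_sub_mul_perm_nonneg σ fun i ↦ (hd i).le
  have den_nonneg : 0 ≤ ∏ i, (1 - d i ^ 2) := prod_nonneg fun i _ ↦ (one_sub_sq_pos (hd i)).le
  calc ∏ i, (1 - d i * d (σ i)) = ∏ i, (1 - d i ^ 2)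
      ↔ (∏ i, (1 - d i ^ 2)) ^ 2 = (∏ i, (1 - d i * d (σ i))) ^ 2 := by
        rw [sq_eq_sq₀ den_nonneg num_nonneg, eq_comm]
    _ ↔ (∏ i, (1 - d i ^ 2)) * ∏ i, (1 - d (σ i) ^ 2) = (∏ i, (1 - d i * d (σ i))) ^ 2 := by
        rw [sq (∏ i, (1 - d i ^ 2)), Equiv.prod_comp σ fun i ↦ 1 - d i ^ 2]
    _ ↔ ∀ i, d (σ i) = d i := by
        rw [prod_one_sub_sq_mul_prod_one_sub_sq_eq_iff (fun i _ ↦ hd i) fun i _ ↦ hd (σ i)]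
        simp only [mem_univ, true_imp_iff, eq_comm]

end OrderedRing

theorem cyclic_product_ge_one_general {ι K : Type*} [Fintype ι] [Field K] [LinearOrder K]
    [IsStrictOrderedRing K] (σ : Equiv.Perm ι) {d : ι → K} (hd : ∀ i, |d i| < 1) :
    1 ≤ ∏ i, (1 - d i * d (σ i)) / (1 - d i ^ 2) ∧
    (∏ i, (1 - d i * d (σ i)) / (1 - d i ^ 2) = 1 ↔ ∀ i j, σ.SameCycle i j → d i = d j) := by
  have den_pos : 0 < ∏ i, (1 - d i ^ 2) := prod_pos fun i _ ↦ one_sub_sq_pos (hd i)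
  rw [prod_div_distrib, one_le_div den_pos, div_eq_one_iff_eq den_pos.ne',
    ← forall_apply_perm_eq_iff_forall_sameCycle]
  exact ⟨prod_one_sub_sq_le_prod_one_sub_mul_perm σ fun i ↦ (hd i).le,
    prod_one_sub_mul_perm_eq_prod_one_sub_sq_iff σ hd⟩

/-- **Claim 3.3 (cyclic product inequality).** Let `m ≥ 2` and `d₁, …, d_m ∈ (0,1)`,
indices mod `m`. Then `∏_{j} (1 − d_j d_{j+1})/(1 − d_j²) ≥ 1`, with equality iff all
`d_j` are equal. -/
theorem cyclic_product_ge_one (m : ℕ) [NeZero m] (hm : 2 ≤ m)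
    (d : Fin m → ℝ) (hd : ∀ j, d j ∈ Set.Ioo (0 : ℝ) 1) :
    1 ≤ ∏ j : Fin m, (1 - d j * d (j + 1)) / (1 - d j ^ 2) ∧
    ((∏ j : Fin m, (1 - d j * d (j + 1)) / (1 - d j ^ 2)) = 1 ↔
      ∀ j k : Fin m, d j = d k) := by
  simpa only [finRotate_apply, sameCycle_finRotate, true_imp_iff] using
    cyclic_product_ge_one_general (finRotate m) fun j ↦ abs_lt.2 ⟨by linarith [(hd j).1], (hd j).2⟩
end

section
/- Let ε > 0, p > 0, R > 0, M ≥ 0, and let φ : [0,R] → ℂ be a continuous function with |φ(s)| ≤ M s^{p} for all s ∈ [0,R]. Then for every t ∈ (0,R], the integral Q_ε(φ)(t) = (1/Γ(ε)) ∫₀ᵗ φ(s) (ln(t/s))^{ε−1} ds/s converges and satisfies |Q_ε(φ)(t)| ≤ M t^{p}/p^{ε}. -/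
open MeasureTheory

/-!
The substitution `s = t e⁻ᵘ` turns `Γ(ε) Q_ε(φ)(t)` into `∫₀^∞ u^(ε-1) φ(t e⁻ᵘ) du`. For
`φ(s) = s ^ p` this is an Euler integral, so power functions are eigenfunctions:
`Q_ε(s ^ p)(t) = t ^ p / p ^ ε`. As the kernel of `Q_ε` is nonnegative, a bound of `φ` by
`M s ^ p` is carried over to `Q_ε(φ)`.
-/

section HadamardIntegral

open Real Set

variable {E : Type*} [NormedAddCommGroup E] [NormedSpace ℝ E] {ε p t : ℝ}

/-- The kernel of the Hadamard fractional integral of order `ε`, as a density with respect to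
Lebesgue measure: the factor `1 / s` comes from the measure `ds / s`. -/
noncomputable def hadamardKernel (ε t s : ℝ) : ℝ :=
  log (t / s) ^ (ε - 1) / s

/-- The Hadamard fractional integral of order `ε`, the operator `Q_ε`, for functions with values
in a real normed space. -/
noncomputable def hadamardIntegral (ε : ℝ) (φ : ℝ → E) (t : ℝ) : E :=
  (1 / Gamma ε) • ∫ s in Ioo 0 t, hadamardKernel ε t s • φ s

theorem measurable_hadamardKernel (ε t : ℝ) : Measurable (hadamardKernel ε t) := by
  unfold hadamardKernel
  fun_prop

theorem hadamardKernel_nonneg {s : ℝ} (hs : 0 < s) (hst : s ≤ t) : 0 ≤ hadamardKernel ε t s :=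
  div_nonneg (rpow_nonneg (log_nonneg ((one_le_div hs).2 hst)) _) hs.le

theorem mul_hadamardKernel_mul_exp_neg (ht : t ≠ 0) (u : ℝ) :
    t * exp (-u) * hadamardKernel ε t (t * exp (-u)) = u ^ (ε - 1) := by
  have hquot : t / (t * exp (-u)) = exp u := by
    rw [exp_neg]
    field_simp
  rw [hadamardKernel, hquot, log_exp, mul_div_cancel₀ _ (mul_ne_zero ht (exp_pos _).ne')]

theorem image_mul_exp_neg_Ioi (ht : 0 < t) : (fun u ↦ t * exp (-u)) '' Ioi 0 = Ioo 0 t := by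
  ext s
  constructor
  · rintro ⟨u, hu, rfl⟩
    exact ⟨by positivity, mul_lt_of_lt_one_right ht (Real.exp_lt_one_iff.2 (neg_lt_zero.2 hu))⟩
  · rintro ⟨hs, hst⟩
    refine ⟨log (t / s), log_pos ((one_lt_div hs).2 hst), ?_⟩
    simp only [exp_neg, exp_log (div_pos ht hs)]
    field_simp

theorem hasDerivAt_mul_exp_neg (t u : ℝ) :
    HasDerivAt (fun u ↦ t * exp (-u)) (-(t * exp (-u))) u := by
  simpa only [mul_neg, mul_one] using (hasDerivAt_neg u).exp.const_mul t

theorem injective_mul_exp_neg (ht : t ≠ 0) : Function.Injective fun u ↦ t * exp (-u) :=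
  (mul_right_injective₀ ht).comp (exp_injective.comp neg_injective)

theorem abs_deriv_smul_hadamardKernel_smul (ht : 0 < t) (φ : ℝ → E) (u : ℝ) :
    |-(t * exp (-u))| • hadamardKernel ε t (t * exp (-u)) • φ (t * exp (-u)) =
      u ^ (ε - 1) • φ (t * exp (-u)) := by
  rw [abs_neg, abs_of_pos (mul_pos ht (exp_pos _)), smul_smul,
    mul_hadamardKernel_mul_exp_neg ht.ne']

theorem integrableOn_hadamardKernel_smul_iff (ht : 0 < t) (φ : ℝ → E) :
    IntegrableOn (fun s ↦ hadamardKernel ε t s • φ s) (Ioo 0 t) ↔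
      IntegrableOn (fun u ↦ u ^ (ε - 1) • φ (t * exp (-u))) (Ioi 0) := by
  rw [← image_mul_exp_neg_Ioi ht, integrableOn_image_iff_integrableOn_abs_deriv_smul
    measurableSet_Ioi (fun u _ ↦ (hasDerivAt_mul_exp_neg t u).hasDerivWithinAt)
    (injective_mul_exp_neg ht.ne').injOn]
  simp only [abs_deriv_smul_hadamardKernel_smul ht]

theorem integral_hadamardKernel_smul (ht : 0 < t) (φ : ℝ → E) :
    ∫ s in Ioo 0 t, hadamardKernel ε t s • φ s =
      ∫ u in Ioi 0, u ^ (ε - 1) • φ (t * exp (-u)) := by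
  rw [← image_mul_exp_neg_Ioi ht, integral_image_eq_integral_abs_deriv_smul
    measurableSet_Ioi (fun u _ ↦ (hasDerivAt_mul_exp_neg t u).hasDerivWithinAt)
    (injective_mul_exp_neg ht.ne').injOn]
  simp only [abs_deriv_smul_hadamardKernel_smul ht]

theorem rpow_smul_mul_exp_neg_rpow (ht : 0 ≤ t) (ε p u : ℝ) :
    u ^ (ε - 1) • (t * exp (-u)) ^ p = t ^ p * (u ^ (ε - 1) * exp (-(p * u))) := by
  rw [mul_rpow ht (exp_pos _).le, ← exp_mul, smul_eq_mul, neg_mul, mul_comm u p]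
  ring

theorem integrableOn_hadamardKernel_smul_rpow (hε : 0 < ε) (hp : 0 < p) (ht : 0 < t) :
    IntegrableOn (fun s ↦ hadamardKernel ε t s • s ^ p) (Ioo 0 t) := by
  rw [integrableOn_hadamardKernel_smul_iff ht]
  simp only [rpow_smul_mul_exp_neg_rpow ht.le]
  have hΓ : IntegrableOn (fun u ↦ u ^ (ε - 1) * exp (-(p * u))) (Ioi 0) := by
    simpa only [rpow_one, neg_mul] using
      integrableOn_rpow_mul_exp_neg_mul_rpow (by linarith : -1 < ε - 1) one_pos hp
  exact hΓ.const_mul _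

theorem hadamardIntegral_rpow (hε : 0 < ε) (hp : 0 < p) (ht : 0 < t) :
    hadamardIntegral ε (fun s ↦ s ^ p) t = t ^ p / p ^ ε := by
  have hΓ : Gamma ε ≠ 0 := (Gamma_pos_of_pos hε).ne'
  rw [hadamardIntegral, integral_hadamardKernel_smul ht]
  simp only [rpow_smul_mul_exp_neg_rpow ht.le]
  rw [integral_const_mul, integral_rpow_mul_exp_neg_mul_Ioi hε hp, div_rpow zero_le_one hp.le,
    one_rpow, smul_eq_mul]
  field_simp

theorem hadamardIntegral_const_mul (ε M : ℝ) (g : ℝ → ℝ) (t : ℝ) :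
    hadamardIntegral ε (fun s ↦ M * g s) t = M * hadamardIntegral ε g t := by
  simp only [hadamardIntegral, smul_eq_mul, mul_left_comm _ M, integral_const_mul]

theorem ae_norm_hadamardKernel_smul_le {φ : ℝ → E} {g : ℝ → ℝ}
    (hle : ∀ᵐ s ∂volume.restrict (Ioo 0 t), ‖φ s‖ ≤ g s) :
    ∀ᵐ s ∂volume.restrict (Ioo 0 t),
      ‖hadamardKernel ε t s • φ s‖ ≤ hadamardKernel ε t s • g s := by
  filter_upwards [hle, ae_restrict_mem measurableSet_Ioo] with s hs hst
  have hk : 0 ≤ hadamardKernel ε t s := hadamardKernel_nonneg hst.1 hst.2.le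
  rw [norm_smul_of_nonneg hk]
  exact mul_le_mul_of_nonneg_left hs hk

theorem integrableOn_hadamardKernel_smul_of_norm_le {φ : ℝ → E} {g : ℝ → ℝ}
    (hg : IntegrableOn (fun s ↦ hadamardKernel ε t s • g s) (Ioo 0 t))
    (hφ : AEStronglyMeasurable φ (volume.restrict (Ioo 0 t)))
    (hle : ∀ᵐ s ∂volume.restrict (Ioo 0 t), ‖φ s‖ ≤ g s) :
    IntegrableOn (fun s ↦ hadamardKernel ε t s • φ s) (Ioo 0 t) :=
  Integrable.mono' hg ((measurable_hadamardKernel ε t).aestronglyMeasurable.smul hφ)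
    (ae_norm_hadamardKernel_smul_le hle)

theorem norm_hadamardIntegral_le_of_norm_le (hε : 0 < ε) {φ : ℝ → E} {g : ℝ → ℝ}
    (hg : IntegrableOn (fun s ↦ hadamardKernel ε t s • g s) (Ioo 0 t))
    (hle : ∀ᵐ s ∂volume.restrict (Ioo 0 t), ‖φ s‖ ≤ g s) :
    ‖hadamardIntegral ε φ t‖ ≤ hadamardIntegral ε g t := by
  have hΓ : 0 ≤ 1 / Gamma ε := one_div_nonneg.2 (Gamma_pos_of_pos hε).le
  rw [hadamardIntegral, norm_smul_of_nonneg hΓ]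
  exact mul_le_mul_of_nonneg_left
    (norm_integral_le_of_norm_le hg (ae_norm_hadamardKernel_smul_le hle)) hΓ

theorem Q_eps_bound_general [CompleteSpace E] {M : ℝ} (hε : 0 < ε) (hp : 0 < p) (ht : 0 < t)
    {φ : ℝ → E} (hφ : AEStronglyMeasurable φ (volume.restrict (Ioo 0 t)))
    (hle : ∀ᵐ s ∂volume.restrict (Ioo 0 t), ‖φ s‖ ≤ M * s ^ p) :
    IntegrableOn (fun s ↦ hadamardKernel ε t s • φ s) (Ioo 0 t) ∧
      ‖hadamardIntegral ε φ t‖ ≤ M * t ^ p / p ^ ε := by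
  have hg : IntegrableOn (fun s ↦ hadamardKernel ε t s • (M * s ^ p)) (Ioo 0 t) := by
    simp only [smul_eq_mul, mul_left_comm _ M]
    exact (integrableOn_hadamardKernel_smul_rpow hε hp ht).const_mul M
  refine ⟨integrableOn_hadamardKernel_smul_of_norm_le hg hφ hle, ?_⟩
  calc ‖hadamardIntegral ε φ t‖ ≤ hadamardIntegral ε (fun s ↦ M * s ^ p) t :=
        norm_hadamardIntegral_le_of_norm_le hε hg hle
    _ = M * t ^ p / p ^ ε := by
        rw [hadamardIntegral_const_mul, hadamardIntegral_rpow hε hp ht, mul_div_assoc]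

end HadamardIntegral

/-- **Proposition 4.6 c).** If `φ : [0,R] → ℂ` is continuous with
`|φ(s)| ≤ M s^p` on `[0,R]`, then for every `t ∈ (0,R]` the integral defining
`Q_ε(φ)(t) = (1/Γ(ε)) ∫₀ᵗ φ(s) (ln(t/s))^{ε−1} ds/s` converges and
`|Q_ε(φ)(t)| ≤ M t^p / p^ε`. -/
theorem Q_eps_bound (ε p R M : ℝ) (hε : 0 < ε) (hp : 0 < p) (hR : 0 < R)
    (hM : 0 ≤ M) (φ : ℝ → ℂ) (hcont : ContinuousOn φ (Set.Icc 0 R))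
    (hbound : ∀ s ∈ Set.Icc (0 : ℝ) R, norm (φ s) ≤ M * s ^ p) :
    ∀ t ∈ Set.Ioc (0 : ℝ) R,
      IntegrableOn
          (fun s : ℝ => φ s * ((Real.log (t / s) ^ (ε - 1) / s : ℝ) : ℂ))
          (Set.Ioo 0 t) ∧
      norm (((1 / Real.Gamma ε : ℝ) : ℂ) *
          ∫ s in Set.Ioo (0 : ℝ) t,
            φ s * ((Real.log (t / s) ^ (ε - 1) / s : ℝ) : ℂ))
        ≤ M * t ^ p / p ^ ε := by
  intro t ht
  have hsub : Set.Ioo 0 t ⊆ Set.Icc 0 R := fun s hs ↦ ⟨hs.1.le, hs.2.le.trans ht.2⟩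
  simpa only [hadamardIntegral, hadamardKernel, Complex.real_smul, mul_comm (φ _)] using
    Q_eps_bound_general hε hp ht.1 ((hcont.mono hsub).aestronglyMeasurable measurableSet_Ioo)
      (ae_restrict_of_forall_mem measurableSet_Ioo fun s hs ↦ hbound s (hsub hs))
end

section
/- Let r ∈ (0,1) and for each integer k ≥ 1 set α_k := k(1−r²)/r² − 1 (so that (α_k+1) r²/(1−r²) = k). Then the sequence λ_k := √(2π/α_k) · (1−r²)^{α_k−1} · (Γ(α_k + k + 2)/(Γ(α_k + 1) · k!)) · r^{2k+1} converges, as k → ∞, to 1/(1−r²)². -/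
/-!
By Stirling's formula for the Gamma function, the value at its mode `b` of the binomial
distribution with parameters `a + b` and `b / (a + b)`, extended to real `a` and `b` by the Gamma
function, is asymptotic to `√((a + b) / (2πab))` as `a, b → ∞`. Up to the factor
`√(2π / α) (α + 1) r / (1 - r²)²`, the eigenvalue `λ_m` is this value at `a = α + 1`, `b = m`
as soon as `r² = m / (α + m + 1)`, and the square roots cancel in the limit.

Stirling's formula passes from integers to reals because `log Γ(x + 1)` and its Stirling
approximation have increments over `[x, x + t]`, `0 ≤ t ≤ 1`, which differ by `O(1 / x)`.
-/

section

open Real Filter Asymptotics Topology Set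

/-- Stirling's approximation `√(2πx) (x / e)^x` of `Γ(x + 1)`. -/
noncomputable def stirlingApprox (x : ℝ) : ℝ :=
  √(2 * π * x) * (x / exp 1) ^ x

/-- The logarithm of the relative error in Stirling's approximation of `Γ(x + 1)`. -/
noncomputable def stirlingRemainder (x : ℝ) : ℝ :=
  log (Gamma (x + 1) / stirlingApprox x)

theorem stirlingApprox_pos {x : ℝ} (hx : 0 < x) : 0 < stirlingApprox x := by
  unfold stirlingApprox
  positivity

theorem log_stirlingApprox {x : ℝ} (hx : 0 < x) :
    log (stirlingApprox x) = x * log x - x + (log (2 * π) + log x) / 2 := by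
  rw [stirlingApprox, log_mul (by positivity) (by positivity), log_sqrt (by positivity),
    log_mul (by positivity) hx.ne', log_rpow (by positivity), log_div hx.ne' (exp_ne_zero 1),
    log_exp]
  ring

theorem hasDerivAt_log_stirlingApprox {x : ℝ} (hx : 0 < x) :
    HasDerivAt (fun y => log (stirlingApprox y)) (log x + 1 / (2 * x)) x := by
  have hlog := hasDerivAt_log hx.ne'
  have h := (((hasDerivAt_id' x).mul hlog).sub (hasDerivAt_id' x)).add
    ((hlog.const_add (log (2 * π))).div_const 2)
  refine (h.congr_deriv ?_).congr_of_eventuallyEq ?_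
  · field_simp
    ring
  · filter_upwards [eventually_gt_nhds hx] with y hy using log_stirlingApprox hy

theorem log_stirlingApprox_add_sub_mem_Icc {x t : ℝ} (hx : 0 < x) (ht : 0 < t) :
    log (stirlingApprox (x + t)) - log (stirlingApprox x) ∈
      Icc (t * log x) (t * (log (x + t) + 1 / (2 * x))) := by
  obtain ⟨c, ⟨hxc, hct⟩, hc⟩ := exists_hasDerivAt_eq_slope (fun y => log (stirlingApprox y))
    (fun y => log y + 1 / (2 * y)) (lt_add_of_pos_right x ht)
    (fun y hy => (hasDerivAt_log_stirlingApprox (hx.trans_le hy.1)).continuousAt.continuousWithinAt)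
    (fun y hy => hasDerivAt_log_stirlingApprox (hx.trans hy.1))
  have hc0 : 0 < c := hx.trans hxc
  rw [add_sub_cancel_left, eq_div_iff ht.ne', mul_comm] at hc
  rw [← hc]
  constructor
  · have : log x ≤ log c + 1 / (2 * c) :=
      (log_le_log hx hxc.le).trans (le_add_of_nonneg_right (by positivity))
    gcongr
  · gcongr

theorem log_Gamma_add_one {x : ℝ} (hx : 0 < x) : log (Gamma (x + 1)) = log x + log (Gamma x) := by
  rw [Gamma_add_one hx.ne', log_mul hx.ne' (Gamma_pos_of_pos hx).ne']

/-- Log-convexity compares the slope of `log Γ` over `[x + 1, x + 1 + t]` with its slopes over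
`[x, x + 1]` and `[x + 1, x + 2]`, which the functional equation gives. -/
theorem log_Gamma_add_one_add_sub_mem_Icc {x t : ℝ} (hx : 0 < x) (ht : t ∈ Ioc (0 : ℝ) 1) :
    log (Gamma (x + t + 1)) - log (Gamma (x + 1)) ∈ Icc (t * log x) (t * log (x + 1)) := by
  obtain ⟨ht0, ht1⟩ := ht
  have h1 : log (Gamma (x + 1)) = log x + log (Gamma x) := log_Gamma_add_one hx
  have h2 : log (Gamma (x + 1 + 1)) = log (x + 1) + log (Gamma (x + 1)) :=
    log_Gamma_add_one (by positivity)
  constructor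
  · have hslope := convexOn_log_Gamma.slope_mono_adjacent (x := x) (y := x + 1) (z := x + t + 1)
      hx (mem_Ioi.2 (by positivity)) (by linarith) (by linarith)
    simp only [Function.comp_apply, add_sub_cancel_left, div_one, h1, add_sub_cancel_right,
      show x + t + 1 - (x + 1) = t by ring, le_div_iff₀ ht0] at hslope
    linarith
  · have hslope := convexOn_log_Gamma.secant_mono (a := x + 1) (x := x + t + 1) (y := x + 1 + 1)
      (mem_Ioi.2 (by positivity)) (mem_Ioi.2 (by positivity)) (mem_Ioi.2 (by positivity))
      (by linarith) (by linarith) (by linarith)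
    simp only [Function.comp_apply, add_sub_cancel_left, div_one, h2, add_sub_cancel_right,
      show x + t + 1 - (x + 1) = t by ring, div_le_iff₀ ht0] at hslope
    linarith

theorem stirlingRemainder_eq_sub {x : ℝ} (hx : 0 < x) :
    stirlingRemainder x = log (Gamma (x + 1)) - log (stirlingApprox x) :=
  log_div (Gamma_pos_of_pos (by positivity)).ne' (stirlingApprox_pos hx).ne'

theorem abs_stirlingRemainder_add_sub_le {x t : ℝ} (hx : 0 < x) (ht : t ∈ Icc (0 : ℝ) 1) :
    |stirlingRemainder (x + t) - stirlingRemainder x| ≤ 3 / (2 * x) := by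
  obtain ⟨ht0, ht1⟩ := ht
  rcases ht0.eq_or_lt with rfl | ht0
  · simp only [add_zero, sub_self, abs_zero]
    positivity
  have hlog : log (x + 1) - log x ≤ 1 / x := by
    rw [← log_div (by positivity) hx.ne']
    exact (log_le_sub_one_of_pos (by positivity)).trans_eq (by field_simp; ring)
  have hgap : t * (log (x + 1) - log x + 1 / (2 * x)) ≤ 3 / (2 * x) :=
    calc t * (log (x + 1) - log x + 1 / (2 * x))
        ≤ 1 * (1 / x + 1 / (2 * x)) := by
          have : log x ≤ log (x + 1) := log_le_log hx (by linarith)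
          gcongr
      _ = 3 / (2 * x) := by field_simp; norm_num
  obtain ⟨hΓ_ge, hΓ_le⟩ := log_Gamma_add_one_add_sub_mem_Icc hx ⟨ht0, ht1⟩
  obtain ⟨hS_ge, hS_le⟩ := log_stirlingApprox_add_sub_mem_Icc hx ht0
  have hlog_le : t * log (x + t) ≤ t * log (x + 1) := by gcongr
  have hinv : 0 < t * (1 / (2 * x)) := by positivity
  rw [stirlingRemainder_eq_sub (by positivity), stirlingRemainder_eq_sub hx, abs_le]
  constructor <;> linarith

theorem tendsto_stirlingRemainder_natCast :
    Tendsto (fun n : ℕ => stirlingRemainder n) atTop (𝓝 0) := by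
  have hne : ∀ᶠ n : ℕ in atTop, √(2 * n * π) * (n / exp 1) ^ n ≠ 0 := by
    filter_upwards [eventually_gt_atTop 0] with n hn
    positivity
  have h := ((isEquivalent_iff_tendsto_one hne).1
    Stirling.factorial_isEquivalent_stirling).log one_ne_zero
  rw [log_one] at h
  refine h.congr fun n => ?_
  rw [Pi.div_apply, stirlingRemainder, stirlingApprox, Gamma_nat_eq_factorial, rpow_natCast,
    mul_right_comm]

theorem tendsto_stirlingRemainder : Tendsto stirlingRemainder atTop (𝓝 0) := by
  have hfloor : Tendsto (fun x : ℝ => (⌊x⌋₊ : ℝ)) atTop atTop :=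
    tendsto_natCast_atTop_atTop.comp tendsto_nat_floor_atTop
  have hdiff : Tendsto (fun x : ℝ => stirlingRemainder x - stirlingRemainder ⌊x⌋₊)
      atTop (𝓝 0) := by
    refine squeeze_zero_norm' ?_ ((hfloor.const_mul_atTop two_pos).const_div_atTop 3)
    filter_upwards [eventually_ge_atTop 1] with x hx
    have hpos : (0 : ℝ) < ⌊x⌋₊ := Nat.cast_pos.2 (Nat.floor_pos.2 hx)
    have hfract : x - ⌊x⌋₊ ∈ Icc (0 : ℝ) 1 :=
      ⟨sub_nonneg.2 (Nat.floor_le (by linarith)), by linarith [Nat.lt_floor_add_one x]⟩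
    simpa only [add_sub_cancel, norm_eq_abs] using abs_stirlingRemainder_add_sub_le hpos hfract
  simpa only [Function.comp_apply, sub_add_cancel, add_zero] using
    hdiff.add (tendsto_stirlingRemainder_natCast.comp tendsto_nat_floor_atTop)

theorem Gamma_add_one_isEquivalent_stirlingApprox :
    (fun x => Gamma (x + 1)) ~[atTop] stirlingApprox := by
  refine isEquivalent_of_tendsto_one ?_
  have h := tendsto_stirlingRemainder.rexp
  rw [exp_zero] at h
  refine h.congr' ?_
  filter_upwards [eventually_gt_atTop 0] with x hx
  exact exp_log (div_pos (Gamma_pos_of_pos (by positivity)) (stirlingApprox_pos hx))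

theorem stirlingApprox_add_div_mul {a b : ℝ} (ha : 0 < a) (hb : 0 < b) :
    stirlingApprox (a + b) / (stirlingApprox a * stirlingApprox b) *
      ((a / (a + b)) ^ a * (b / (a + b)) ^ b) = √((a + b) / (2 * π * a * b)) := by
  have hab : 0 < a + b := by positivity
  have hS := stirlingApprox_pos hab
  have hSa := stirlingApprox_pos ha
  have hSb := stirlingApprox_pos hb
  refine log_injOn_pos (mem_Ioi.2 (by positivity)) (mem_Ioi.2 (by positivity)) ?_
  rw [log_mul (by positivity) (by positivity), log_div (by positivity) (by positivity),
    log_mul hSa.ne' hSb.ne', log_stirlingApprox hab, log_stirlingApprox ha, log_stirlingApprox hb,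
    log_mul (x := (a / (a + b)) ^ a) (by positivity) (by positivity), log_rpow (by positivity),
    log_rpow (by positivity), log_div ha.ne' hab.ne', log_div hb.ne' hab.ne',
    log_sqrt (by positivity), log_div hab.ne' (by positivity), log_mul (by positivity) hb.ne',
    log_mul (by positivity) ha.ne']
  ring

/-- The probability of the value `b` under the binomial distribution with parameters `a + b` and
`b / (a + b)`, whose mode it is, extended to real `a` and `b` by the Gamma function. -/
noncomputable def binomialMode (a b : ℝ) : ℝ :=
  Gamma (a + b + 1) / (Gamma (a + 1) * Gamma (b + 1)) * ((a / (a + b)) ^ a * (b / (a + b)) ^ b)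

section Asymptotics

variable {ι : Type*} {l : Filter ι} {a b : ι → ℝ}

theorem binomialMode_isEquivalent (ha : Tendsto a l atTop) (hb : Tendsto b l atTop) :
    (fun i => binomialMode (a i) (b i)) ~[l]
      fun i => √((a i + b i) / (2 * π * a i * b i)) := by
  have hΓ {u : ι → ℝ} (hu : Tendsto u l atTop) :=
    Gamma_add_one_isEquivalent_stirlingApprox.comp_tendsto hu
  refine (((hΓ (ha.atTop_add_atTop hb)).div ((hΓ ha).mul (hΓ hb))).mul
    (IsEquivalent.refl (u := fun i => (a i / (a i + b i)) ^ a i * (b i / (a i + b i)) ^ b i)))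
    |>.congr_right ?_
  filter_upwards [ha.eventually_gt_atTop 0, hb.eventually_gt_atTop 0] with i hai hbi
  exact stirlingApprox_add_div_mul hai hbi

theorem tendsto_sqrt_mul_binomialMode (ha : Tendsto a l atTop) (hb : Tendsto b l atTop) :
    Tendsto (fun i => √(2 * π * a i * b i / (a i + b i)) * binomialMode (a i) (b i)) l (𝓝 1) := by
  have hpos : ∀ᶠ i in l, 0 < (a i + b i) / (2 * π * a i * b i) := by
    filter_upwards [ha.eventually_gt_atTop 0, hb.eventually_gt_atTop 0] with i hai hbi
    positivity
  have h := (isEquivalent_iff_tendsto_one (hpos.mono fun i hi => (sqrt_pos.2 hi).ne')).1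
    (binomialMode_isEquivalent ha hb)
  refine h.congr fun i => ?_
  rw [Pi.div_apply, div_eq_inv_mul, ← sqrt_inv, inv_div]

end Asymptotics

/-- The eigenvalue `λ_m` of the normalized Toeplitz operator on `A²_α(𝔻)` whose symbol is the
arc-length measure on the circle of radius `r`, extended to real `m` by writing `m!` as
`Γ(m + 1)`. -/
noncomputable def toeplitzEigenvalue (r α m : ℝ) : ℝ :=
  √(2 * π / α) * (1 - r ^ 2) ^ (α - 1) *
    (Gamma (α + m + 2) / (Gamma (α + 1) * Gamma (m + 1))) * r ^ (2 * m + 1)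

theorem toeplitzEigenvalue_sub_one_eq {r a b : ℝ} (hr : 0 < r) (ha : 1 < a) (hb : 0 < b)
    (hrab : r ^ 2 = b / (a + b)) :
    toeplitzEigenvalue r (a - 1) b =
      √(a / (a - 1)) * (√(2 * π * a * b / (a + b)) * binomialMode a b) * (1 / (1 - r ^ 2) ^ 2) := by
  have ha0 : 0 < a := by linarith
  have ha1 : 0 < a - 1 := by linarith
  have hs : 1 - r ^ 2 = a / (a + b) := by rw [hrab]; field_simp; ring
  have hs0 : 0 < 1 - r ^ 2 := by rw [hs]; positivity
  have hΓ : Gamma (a + 1) = a * Gamma a := Gamma_add_one ha0.ne'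
  have hr_pow : r ^ (2 * b + 1) = (r ^ 2) ^ b * r := by
    rw [rpow_add_one hr.ne', rpow_mul hr.le, rpow_two]
  have hs_pow : (1 - r ^ 2) ^ (a - 1 - 1) = (1 - r ^ 2) ^ a / (1 - r ^ 2) ^ 2 := by
    rw [sub_sub, one_add_one_eq_two, rpow_sub hs0, rpow_two]
  have hsqrt : √(a / (a - 1)) * √(2 * π * a * b / (a + b)) = √(2 * π / (a - 1)) * a * r := by
    rw [← sqrt_mul (by positivity),
      show a / (a - 1) * (2 * π * a * b / (a + b)) = 2 * π / (a - 1) * (a * r) ^ 2 by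
        rw [mul_pow, hrab]; ring,
      sqrt_mul (by positivity), sqrt_sq (by positivity), mul_assoc]
  rw [← mul_assoc, hsqrt, toeplitzEigenvalue, binomialMode, hr_pow, hs_pow, ← hs, ← hrab, hΓ,
    sub_add_cancel, show a - 1 + b + 2 = a + b + 1 by ring]
  have := Gamma_pos_of_pos ha0
  field_simp

theorem tendsto_div_sub_one_atTop : Tendsto (fun x : ℝ => x / (x - 1)) atTop (𝓝 1) := by
  have h : Tendsto (fun x : ℝ => 1 + 1 / (x - 1)) atTop (𝓝 (1 + 0)) :=
    ((tendsto_atTop_add_const_right atTop (-1) tendsto_id).const_div_atTop 1).const_add 1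
  rw [add_zero] at h
  refine h.congr' ?_
  filter_upwards [eventually_gt_atTop 1] with x hx
  have : x - 1 ≠ 0 := by linarith
  field_simp
  ring

theorem largest_eigenvalue_limit_general {r : ℝ} (hr : r ∈ Ioo (0 : ℝ) 1) :
    Tendsto (fun x : ℝ => toeplitzEigenvalue r (x * (1 - r ^ 2) / r ^ 2 - 1) x) atTop
      (𝓝 (1 / (1 - r ^ 2) ^ 2)) := by
  obtain ⟨hr0, hr1⟩ := hr
  have hs : 0 < 1 - r ^ 2 := by nlinarith
  have ha : Tendsto (fun x : ℝ => x * (1 - r ^ 2) / r ^ 2) atTop atTop :=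
    (tendsto_id.atTop_mul_const hs).atTop_div_const (by positivity)
  have h := ((tendsto_div_sub_one_atTop.comp ha).sqrt.mul
    (tendsto_sqrt_mul_binomialMode ha tendsto_id)).mul_const (1 / (1 - r ^ 2) ^ 2)
  rw [sqrt_one, one_mul, one_mul] at h
  refine h.congr' ?_
  filter_upwards [ha.eventually_gt_atTop 1, eventually_gt_atTop 0] with x hx1 hx0
  exact (toeplitzEigenvalue_sub_one_eq hr0 hx1 hx0 (by field_simp; ring)).symm

end

/-- **Limit of the largest eigenvalue.** For `r ∈ (0,1)` and
`α_k := k(1−r²)/r² − 1` (so that `(α_k+1) r²/(1−r²) = k`), the eigenvalues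
`λ_k = √(2π/α_k) (1−r²)^{α_k−1} (Γ(α_k+k+2)/(Γ(α_k+1) k!)) r^{2k+1}` of the
normalized Toeplitz operator converge to `1/(1−r²)²` as `k → ∞`. -/
theorem largest_eigenvalue_limit (r : ℝ) (hr : r ∈ Set.Ioo (0 : ℝ) 1) :
    Filter.Tendsto
      (fun k : ℕ =>
        let α : ℝ := k * (1 - r ^ 2) / r ^ 2 - 1
        Real.sqrt (2 * Real.pi / α) * (1 - r ^ 2) ^ (α - 1) *
          (Real.Gamma (α + k + 2) / (Real.Gamma (α + 1) * k.factorial)) *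
          r ^ (2 * k + 1))
      Filter.atTop (nhds (1 / (1 - r ^ 2) ^ 2)) := by
  refine ((largest_eigenvalue_limit_general hr).comp tendsto_natCast_atTop_atTop).congr fun k => ?_
  rw [Function.comp_apply, toeplitzEigenvalue, Real.Gamma_nat_eq_factorial]
  exact_mod_cast rfl
end

section
/- Let X be a finite-dimensional real inner product space, J : X → X a linear isometry with J ∘ J = −id, and V ⊆ X a co-isotropic subspace (i.e. V^ω ⊆ V). Then the image of the map K_V : V → V, K_V(v) = Π_V(J v), equals J(V) ∩ V. -/
/-- The symplectic complement `V^ω = {ξ : ∀ v ∈ V, ω(ξ,v) = 0}` of a subspace `V`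
of a real inner product space with compatible complex structure `J`, where
`ω(u,v) = ⟪u, J v⟫`. -/
def sympComp {X : Type*} [NormedAddCommGroup X] [InnerProductSpace ℝ X]
    (J : X →ₗ[ℝ] X) (V : Submodule ℝ X) : Submodule ℝ X where
  carrier := {ξ : X | ∀ v ∈ V, (inner ℝ ξ (J v) : ℝ) = 0}
  zero_mem' := by intro v hv; simp
  add_mem' := by
    intro a b ha hb v hv
    rw [inner_add_left, ha v hv, hb v hv, add_zero]
  smul_mem' := by
    intro c a ha v hv
    rw [real_inner_smul_left, ha v hv, mul_zero]

/-- The map `K_V = Π_V ∘ J`, viewed as an endomorphism of the ambient space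
(`Π_V` is the orthogonal projection onto `V`). -/
noncomputable def KV {X : Type*} [NormedAddCommGroup X] [InnerProductSpace ℝ X]
    [FiniteDimensional ℝ X] (J : X →ₗ[ℝ] X) (V : Submodule ℝ X) : X →ₗ[ℝ] X :=
  V.subtype ∘ₗ V.orthogonalProjectionOnto.toLinearMap ∘ₗ J

/-!
The symplectic complement of `V` is the orthogonal complement of `J(V)`, so taking orthogonal
complements turns co-isotropy into `Vᗮ ≤ J(V)`. A subspace containing the kernel of a projection is
stable under that projection, so its image is its intersection with the range; apply this to `J(V)`
and the orthogonal projection onto `V`.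
-/

theorem map_eq_inf_range_of_isIdempotentElem {R M : Type*} [Ring R]
    [AddCommGroup M] [Module R M] {p : M →ₗ[R] M} (hp : IsIdempotentElem p)
    {W : Submodule R M} (hW : p.ker ≤ W) :
    W.map p = W ⊓ p.range := by
  have apply_apply (x : M) : p (p x) = p x := LinearMap.congr_fun hp x
  refine le_antisymm (le_inf ?_ LinearMap.map_le_range) ?_
  · rintro _ ⟨w, hw, rfl⟩
    have sub_mem_ker : w - p w ∈ p.ker := by
      rw [LinearMap.mem_ker, map_sub, apply_apply, sub_self]
    exact (W.sub_mem_iff_right hw).mp (hW sub_mem_ker)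
  · rintro x ⟨hxW, hx⟩
    exact ⟨x, hxW, (LinearMap.IsIdempotentElem.mem_range_iff hp).mp hx⟩

theorem map_starProjection_eq_inf_of_orthogonal_le {𝕜 E : Type*} [RCLike 𝕜]
    [NormedAddCommGroup E] [InnerProductSpace 𝕜 E] {V W : Submodule 𝕜 E}
    [V.HasOrthogonalProjection] (h : Vᗮ ≤ W) :
    W.map V.starProjection.toLinearMap = W ⊓ V := by
  have hp : IsIdempotentElem V.starProjection.toLinearMap :=
    ContinuousLinearMap.IsIdempotentElem.toLinearMap V.isIdempotentElem_starProjection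
  rw [map_eq_inf_range_of_isIdempotentElem hp (V.ker_starProjection.trans_le h),
    V.range_starProjection]

section

variable {X : Type*} [NormedAddCommGroup X] [InnerProductSpace ℝ X]

theorem sympComp_eq_orthogonal_map (J : X →ₗ[ℝ] X) (V : Submodule ℝ X) :
    sympComp J V = (V.map J)ᗮ := by
  ext ξ
  rw [Submodule.mem_orthogonal']
  constructor
  · rintro hξ _ ⟨v, hv, rfl⟩
    exact hξ v hv
  · exact fun hξ v hv => hξ (J v) (Submodule.mem_map_of_mem hv)

theorem KV_image_of_coisotropic_general (J : X →ₗ[ℝ] X) (V : Submodule ℝ X)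
    [V.HasOrthogonalProjection] [(V.map J).HasOrthogonalProjection]
    (hco : sympComp J V ≤ V) :
    V.map (V.starProjection.toLinearMap ∘ₗ J) = V.map J ⊓ V := by
  have orthogonal_le_map : Vᗮ ≤ V.map J := by
    rwa [Submodule.orthogonal_le_iff_orthogonal_le, ← sympComp_eq_orthogonal_map]
  rw [Submodule.map_comp, map_starProjection_eq_inf_of_orthogonal_le orthogonal_le_map]

end

/-- **Proposition B.7.** If `V` is a co-isotropic subspace (`V^ω ⊆ V`), then the
image of `K_V = Π_V ∘ J|_V : V → V` equals `J(V) ∩ V`. -/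
theorem KV_image_of_coisotropic {X : Type*} [NormedAddCommGroup X]
    [InnerProductSpace ℝ X] [FiniteDimensional ℝ X]
    (J : X →ₗ[ℝ] X) (hJiso : ∀ x, ‖J x‖ = ‖x‖) (hJ2 : ∀ x, J (J x) = -x)
    (V : Submodule ℝ X) (hco : sympComp J V ≤ V) :
    Submodule.map (KV J V) V = Submodule.map J V ⊓ V := by
  change V.map (V.starProjection.toLinearMap ∘ₗ J) = _
  exact KV_image_of_coisotropic_general J V hco
end
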